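/- Under the zero-loss hypothesis, the inclusion map TN = B_ε(P) ∩ B_{2ε}(G) ↪ B_ε(P) ∪ B_{2ε}(G) of the intersection of the backgrounds into their union induces a bijection from the set of connected components of TN onto the set of connected components of B_ε(P) ∪ B_{2ε}(G). (This is the degree-0, background part of the statement that the DIU metric ξ^{err} vanishes: dim ker j₀ = dim coker j₀ = 0.) -/

import Mathlib

/-!
Let `K` and `L` be the thickened foregrounds, so that `TN = Kᶜ ∩ Lᶜ`, the union of the backgrounds
is `Kᶜ ∪ Lᶜ`, and these two open sets differ by the error set `FP ∪ FN = K ∆ L`.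

Injectivity: assign to each point of `TN` its component, and to each error point the unique
component of `TN` sharing a boundary edge with its error component. This assignment is locally
constant on `Kᶜ ∪ Lᶜ`, hence constant on its components. The critical case is an error point `x`
with points of `TN` nearby: inside a small ball, a component of `TN` must meet the error component
of `x` in uncountably many boundary points, since otherwise removing a countable set would
disconnect the ball. So that component shares an edge with the one of `x` and is the assigned one.

Surjectivity: the edge joining an error component to `TN` leaves `Kᶜ ∪ Lᶜ` only at points where
the frontiers of `K` and `L` cross. The frontiers consist of sides of squares with centres in a
translate of `ℤ²` and half-widths `ε + 1/2` and `2 * ε + 1/2`; as neither `ε` nor `3 * ε` is an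
integer, no sides overlap and there are finitely many crossings. So the edge contains a point of
`Kᶜ ∪ Lᶜ`, which connects the error component to `TN`.
-/

open Set Metric

noncomputable section

/-- The plane modeled as `Fin 2 → ℝ` with the Pi (sup) norm. -/
abbrev Plane : Type := Fin 2 → ℝ

/-- The Euclidean plane (for Euclidean-norm disks and annuli). -/
abbrev EPlane : Type := EuclideanSpace ℝ (Fin 2)

/-- The closed unit pixel `[i-1,i] × [j-1,j]` for a pixel index `(i,j)`. -/
def pixel (p : ℕ × ℕ) : Set Plane :=
  {x | x 0 ∈ Set.Icc ((p.1 : ℝ) - 1) (p.1 : ℝ) ∧ x 1 ∈ Set.Icc ((p.2 : ℝ) - 1) (p.2 : ℝ)}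

/-- A binary image `S` lies on the `h × w` grid `{1,…,h} × {1,…,w}`. -/
def OnGrid (S : Set (ℕ × ℕ)) (h w : ℕ) : Prop :=
  S ⊆ Set.Icc 1 h ×ˢ Set.Icc 1 w

/-- The foreground `F(S)` of a binary image. -/
def fg (S : Set (ℕ × ℕ)) : Set Plane := ⋃ p ∈ S, pixel p

/-- Closed `ε`-thickening `D_ε(X)` with respect to the sup norm. -/
def thick (ε : ℝ) (X : Set Plane) : Set Plane := {y | ∃ x ∈ X, ‖x - y‖ ≤ ε}

/-- `C` is a connected component of `A` (as a subset of the plane). -/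
def IsCompOf (C A : Set Plane) : Prop := ∃ x ∈ A, C = connectedComponentIn A x

/-- Two subsets share a boundary edge if their closures intersect in an infinite set. -/
def SharesEdge (C D : Set Plane) : Prop := (closure C ∩ closure D).Infinite

/-- `X` strongly deformation retracts onto `A`. -/
def SDR (X A : Set Plane) : Prop :=
  ∃ H : C(↥X × unitInterval, ↥X),
    (∀ x, H (x, 0) = x) ∧ (∀ x, ((H (x, 1) : Plane)) ∈ A) ∧
    (∀ a : ↥X, (a : Plane) ∈ A → ∀ t, H (a, t) = a)

def TPset (P G : Set (ℕ × ℕ)) (ε : ℝ) : Set Plane := thick ε (fg P) ∩ thick (2 * ε) (fg G)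
def TNset (P G : Set (ℕ × ℕ)) (ε : ℝ) : Set Plane := (thick ε (fg P))ᶜ ∩ (thick (2 * ε) (fg G))ᶜ
def FPset (P G : Set (ℕ × ℕ)) (ε : ℝ) : Set Plane := thick ε (fg P) ∩ (thick (2 * ε) (fg G))ᶜ
def FNset (P G : Set (ℕ × ℕ)) (ε : ℝ) : Set Plane := (thick ε (fg P))ᶜ ∩ thick (2 * ε) (fg G)

/-- A component `C` (of `FP` or `FN`) is regular: exactly one component of `TP` and exactly
one component of `TN` share a boundary edge with it. -/
def RegularComp (P G : Set (ℕ × ℕ)) (ε : ℝ) (C : Set Plane) : Prop :=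
  (∃! T : Set Plane, IsCompOf T (TPset P G ε) ∧ SharesEdge T C) ∧
  (∃! T : Set Plane, IsCompOf T (TNset P G ε) ∧ SharesEdge T C)

/-- The zero-loss hypothesis: every component of `FP` and every component of `FN` is regular. -/
def ZeroLoss (P G : Set (ℕ × ℕ)) (ε : ℝ) : Prop :=
  (∀ C : Set Plane, IsCompOf C (FPset P G ε) → RegularComp P G ε C) ∧
  (∀ C : Set Plane, IsCompOf C (FNset P G ε) → RegularComp P G ε C)

/-- The intersection of the (thinned-out) backgrounds is contained in their union. -/
theorem TNset_subset_union (P G : Set (ℕ × ℕ)) (ε : ℝ) :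
    TNset P G ε ⊆ (thick ε (fg P))ᶜ ∪ (thick (2 * ε) (fg G))ᶜ :=
  fun _ hx => Or.inl hx.1

open scoped Topology symmDiff

section Topology

variable {X : Type*} [TopologicalSpace X] {U W K L : Set X} {x y : X}

theorem closure_connectedComponentIn_inter_subset (U : Set X) (x : X) :
    closure (connectedComponentIn U x) ∩ U ⊆ connectedComponentIn U x := by
  by_cases hx : x ∈ U
  · exact (isPreconnected_connectedComponentIn.subset_closure
      (subset_inter subset_closure (connectedComponentIn_subset U x))
      inter_subset_left).subset_connectedComponentIn
      ⟨subset_closure (mem_connectedComponentIn hx), hx⟩ inter_subset_right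
  · simp [connectedComponentIn_eq_empty hx]

theorem connectedComponents_mk_eq_iff_mem_connectedComponentIn {x y : U} :
    ConnectedComponents.mk x = ConnectedComponents.mk y ↔
      (x : X) ∈ connectedComponentIn U y := by
  rw [ConnectedComponents.coe_eq_coe', connectedComponentIn_eq_image y.2,
    Subtype.val_injective.mem_set_image]

theorem connectedComponentIn_inter_mem_nhdsWithin [LocallyConnectedSpace K] (hU : IsOpen U)
    (hx : x ∈ K ∩ U) : connectedComponentIn (K ∩ U) x ∈ 𝓝[K] x := by
  have hopen : IsOpen (connectedComponentIn ((↑) ⁻¹' U : Set K) ⟨x, hx.1⟩) :=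
    (hU.preimage continuous_subtype_val).connectedComponentIn
  have hmem : (⟨x, hx.1⟩ : K) ∈ ((↑) ⁻¹' U : Set K) := hx.2
  rw [nhdsWithin_eq_map_subtype_coe hx.1]
  refine Filter.mem_of_superset
    (Filter.image_mem_map (hopen.mem_nhds (mem_connectedComponentIn hmem))) ?_
  convert! continuous_subtype_val.continuousOn.image_connectedComponentIn_subset hmem using 2
  exact (Subtype.image_preimage_coe K U).symm

theorem connectedComponentIn_symmDiff (hK : IsClosed K) (hL : IsClosed L) (hx : x ∈ K ∩ Lᶜ) :
    connectedComponentIn (K ∆ L) x = connectedComponentIn (K ∩ Lᶜ) x := by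
  have hsub : K ∩ Lᶜ ⊆ K ∆ L := subset_union_left
  have hdisj : K ∆ L ∩ (Lᶜ ∩ Kᶜ) = ∅ := by
    ext z; simp only [mem_symmDiff, mem_inter_iff, mem_compl_iff, mem_empty_iff_false]; tauto
  have hcover : K ∆ L ⊆ Lᶜ ∪ Kᶜ := by
    intro z; simp only [mem_symmDiff, mem_union, mem_compl_iff]; tauto
  have hC := connectedComponentIn_subset (K ∆ L) x
  have hxC := mem_connectedComponentIn (hsub hx)
  refine (IsPreconnected.subset_connectedComponentIn isPreconnected_connectedComponentIn hxC
    ?_).antisymm (connectedComponentIn_mono x hsub)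
  rcases isPreconnected_iff_subset_of_disjoint.1 isPreconnected_connectedComponentIn _ _
    hL.isOpen_compl hK.isOpen_compl (hC.trans hcover)
    (subset_empty_iff.1 (hdisj ▸ inter_subset_inter_left _ hC)) with h | h
  · exact fun z hz => ⟨(hC hz).elim And.left fun hzL => absurd hzL.1 (h hz), h hz⟩
  · exact absurd hx.1 (h hxC)

/-- A closed set with the local features of a polyhedral body: each of its points is a limit of
interior points, and it is locally connected. It abstracts the thickened foreground of a binary
image. -/
structure IsTame (K : Set X) : Prop where
  isClosed : IsClosed K
  subset_closure_interior : K ⊆ closure (interior K)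
  locallyConnectedSpace : LocallyConnectedSpace K

theorem IsTame.connectedComponentIn_mem_nhdsWithin (hK : IsTame K) (hL : IsClosed L)
    (hx : x ∈ K ∩ Lᶜ) : connectedComponentIn (K ∩ Lᶜ) x ∈ 𝓝[K] x :=
  have := hK.locallyConnectedSpace
  connectedComponentIn_inter_mem_nhdsWithin hL.isOpen_compl hx

theorem IsTame.connectedComponentIn_symmDiff_mem_nhdsWithin (hK : IsTame K) (hL : IsTame L)
    (hx : x ∈ K ∆ L) : connectedComponentIn (K ∆ L) x ∈ 𝓝[K ∆ L] x := by
  wlog hxK : x ∈ K ∩ Lᶜ generalizing K L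
  · rw [symmDiff_comm] at hx ⊢
    exact this hL hK hx (hx.resolve_right hxK)
  have hLx : Lᶜ ∈ 𝓝 x := hL.isClosed.isOpen_compl.mem_nhds hxK.2
  have hnhds : 𝓝[K ∆ L] x ≤ 𝓝[K] x := nhdsWithin_le_iff.2 <| by
    filter_upwards [mem_nhdsWithin_of_mem_nhds hLx, self_mem_nhdsWithin] with z hzL hz
    exact hz.elim And.left fun hzL' => absurd hzL'.1 hzL
  rw [connectedComponentIn_symmDiff hK.isClosed hL.isClosed hxK]
  exact hnhds (hK.connectedComponentIn_mem_nhdsWithin hL.isClosed hxK)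

theorem frontier_iUnion_subset_of_locallyFinite {ι : Type*} {D : ι → Set X}
    (hD : LocallyFinite D) : frontier (⋃ i, D i) ⊆ ⋃ i, frontier (D i) := by
  rintro x ⟨hx, hx'⟩
  obtain ⟨i, hi⟩ := mem_iUnion.1 (hD.closure_iUnion ▸ hx)
  exact mem_iUnion.2 ⟨i, hi, fun h => hx' (interior_mono (subset_iUnion D i) h)⟩

theorem connectedComponentIn_eq_of_closure_inter_nonempty (hWU : W ⊆ U) {M : Set X} (hMU : M ⊆ U)
    (h : (closure (connectedComponentIn W x) ∩ closure (connectedComponentIn M y) ∩ U).Nonempty) :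
    connectedComponentIn U x = connectedComponentIn U y := by
  obtain ⟨z, ⟨hzx, hzy⟩, hzU⟩ := h
  have hx : z ∈ connectedComponentIn U x := closure_connectedComponentIn_inter_subset U x
    ⟨closure_mono (connectedComponentIn_mono x hWU) hzx, hzU⟩
  have hy : z ∈ connectedComponentIn U y := closure_connectedComponentIn_inter_subset U y
    ⟨closure_mono (connectedComponentIn_mono y hMU) hzy, hzU⟩
  exact (connectedComponentIn_eq hx).trans (connectedComponentIn_eq hy).symm

theorem closure_compl_inter_compl_inter_subset_frontier :
    closure (Kᶜ ∩ Lᶜ) ∩ (K ∩ L) ⊆ frontier K ∩ frontier L := by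
  rintro x ⟨hx, hxK, hxL⟩
  rw [frontier_eq_closure_inter_closure, frontier_eq_closure_inter_closure]
  exact ⟨⟨subset_closure hxK, closure_mono inter_subset_left hx⟩,
    subset_closure hxL, closure_mono inter_subset_right hx⟩

/-- On `U \ W` the function `φ` is the unique adjacent component of `W`. -/
theorem exists_eventually_eq_extend_connectedComponentIn [LocallyConnectedSpace X]
    {adj : Set X → Set X → Prop} (hW : IsOpen W) (hWU : W ⊆ U)
    (hM : ∀ x ∈ U \ W, connectedComponentIn (U \ W) x ∈ 𝓝[U \ W] x)
    (hunique : ∀ x ∈ U \ W, ∃! T, (∃ a ∈ W, T = connectedComponentIn W a) ∧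
      adj T (connectedComponentIn (U \ W) x))
    (hnear : ∀ x ∈ U \ W, ∀ᶠ z in 𝓝[W] x,
      adj (connectedComponentIn W z) (connectedComponentIn (U \ W) x)) :
    ∃ φ : X → Set X, EqOn φ (connectedComponentIn W) W ∧
      ∀ x ∈ U, ∀ᶠ z in 𝓝[U] x, φ x = φ z := by
  classical
  choose! T hT hTu using hunique
  refine ⟨W.piecewise (connectedComponentIn W) T, W.piecewise_eqOn _ _, fun x hxU => ?_⟩
  by_cases hx : x ∈ W
  · filter_upwards [mem_nhdsWithin_of_mem_nhds (connectedComponentIn_mem_nhds (hW.mem_nhds hx))]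
      with z hz
    rw [piecewise_eq_of_mem _ _ _ hx,
      piecewise_eq_of_mem _ _ _ (connectedComponentIn_subset W x hz), connectedComponentIn_eq hz]
  have hxM : x ∈ U \ W := ⟨hxU, hx⟩
  have hWnear : ∀ᶠ z in 𝓝[W] x, T x = connectedComponentIn W z := by
    filter_upwards [hnear x hxM, self_mem_nhdsWithin] with z hadj hz
    exact (hTu x hxM _ ⟨⟨z, hz, rfl⟩, hadj⟩).symm
  have hMnear : ∀ᶠ z in 𝓝[U \ W] x, T x = T z := by
    filter_upwards [hM x hxM, self_mem_nhdsWithin] with z hz hzM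
    exact (hTu x hxM _ (connectedComponentIn_eq hz ▸ hT z hzM)).symm
  rw [← union_sdiff_cancel hWU, nhdsWithin_union, Filter.eventually_sup,
    piecewise_eq_of_notMem _ _ _ hx]
  constructor
  · filter_upwards [hWnear, self_mem_nhdsWithin] with z hz hzW
    rwa [piecewise_eq_of_mem _ _ _ hzW]
  · filter_upwards [hMnear, self_mem_nhdsWithin] with z hz hzM
    rwa [piecewise_eq_of_notMem _ _ _ hzM.2]

theorem connectedComponentsMap_inclusion_injective {φ : X → Set X} (hWU : W ⊆ U)
    (hφW : EqOn φ (connectedComponentIn W) W) (hφ : ∀ x ∈ U, ∀ᶠ z in 𝓝[U] x, φ x = φ z) :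
    Function.Injective (continuous_inclusion hWU).connectedComponentsMap := by
  refine ConnectedComponents.surjective_coe.forall₂.2 fun a b hab => ?_
  have hab' : (a : X) ∈ connectedComponentIn U b :=
    connectedComponents_mk_eq_iff_mem_connectedComponentIn.1 hab
  have hsub := connectedComponentIn_subset U (b : X)
  have heq : φ a = φ b := isPreconnected_connectedComponentIn.induction₂ (φ · = φ ·)
    (fun x hx => nhdsWithin_mono x hsub (hφ x (hsub hx))) (fun _ _ _ _ _ _ => Eq.trans)
    (fun _ _ _ _ => Eq.symm) hab' (mem_connectedComponentIn (hWU b.2))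
  rw [hφW a.2, hφW b.2] at heq
  exact connectedComponents_mk_eq_iff_mem_connectedComponentIn.2
    (heq ▸ mem_connectedComponentIn a.2)

theorem connectedComponentsMap_inclusion_surjective (hWU : W ⊆ U)
    (h : ∀ x ∈ U \ W, ∃ a ∈ W, connectedComponentIn U a = connectedComponentIn U x) :
    Function.Surjective (continuous_inclusion hWU).connectedComponentsMap := by
  refine ConnectedComponents.surjective_coe.forall.2 fun ⟨x, hx⟩ => ?_
  obtain ⟨a, ha, hax⟩ : ∃ a ∈ W, connectedComponentIn U a = connectedComponentIn U x := by
    by_cases hxW : x ∈ W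
    · exact ⟨x, hxW, rfl⟩
    · exact h x ⟨hx, hxW⟩
  exact ⟨.mk ⟨a, ha⟩, connectedComponents_mk_eq_iff_mem_connectedComponentIn.2
    (hax ▸ mem_connectedComponentIn (hWU ha))⟩

end Topology

section NormedSpace

variable {E : Type*} [NormedAddCommGroup E] [NormedSpace ℝ E] {K L : Set E} {x y : E} {r : ℝ}

theorem isPreconnected_ball_diff_of_one_lt_rank (hE : 1 < Module.rank ℝ E) {s : Set E}
    (hs : s.Countable) (x : E) (r : ℝ) : IsPreconnected (ball x r \ s) := by
  rcases le_or_gt r 0 with hr | hr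
  · simp [ball_eq_empty.2 hr, isPreconnected_empty]
  let e := OpenPartialHomeomorph.univBall (E := E) x r
  have he : e.source = univ := OpenPartialHomeomorph.univBall_source x r
  have hrange : range e = ball x r := by
    rw [← image_univ, ← he, e.image_source_eq_target, OpenPartialHomeomorph.univBall_target x hr]
  have hinj : Function.Injective e := injOn_univ.1 (he ▸ e.injOn)
  rw [← hrange, sdiff_eq, inter_comm, ← image_preimage_eq_inter_range, preimage_compl]
  exact ((hs.preimage hinj).isConnected_compl_of_one_lt_rank hE).isPreconnected.image e
    (OpenPartialHomeomorph.continuous_univBall x r).continuousOn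

/-- Otherwise removing this countable set from the ball would disconnect it. -/
theorem not_countable_closure_connectedComponentIn_inter (hE : 1 < Module.rank ℝ E)
    (hK : IsClosed K) (hy : y ∈ ball x r \ K) (hint : (ball x r ∩ interior K).Nonempty) :
    ¬(closure (connectedComponentIn (ball x r \ K) y) ∩ (ball x r ∩ K)).Countable := by
  intro hF
  set C := connectedComponentIn (ball x r \ K) y
  set F := closure C ∩ (ball x r ∩ K)
  have hC : C ⊆ ball x r \ K := connectedComponentIn_subset _ _
  have hCopen : IsOpen C := (isOpen_ball.sdiff hK).connectedComponentIn
  have hyC : y ∈ C := mem_connectedComponentIn hy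
  have hclosed : closure C ∩ (ball x r \ F) ⊆ C := fun z hz =>
    closure_connectedComponentIn_inter_subset _ _
      ⟨hz.1, hz.2.1, fun hzK => hz.2.2 ⟨hz.1, hz.2.1, hzK⟩⟩
  have hfill : ball x r \ F ⊆ C :=
    (isPreconnected_ball_diff_of_one_lt_rank hE hF x r).subset_of_closure_inter_subset hCopen
      ⟨y, ⟨hy.1, fun hyF => hy.2 hyF.2.2⟩, hyC⟩ hclosed
  have : Nontrivial E := rank_pos_iff_nontrivial.1 (zero_lt_one.trans hE)
  obtain ⟨z, ⟨hzB, hzK⟩, hzF⟩ :=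
    (hF.dense_compl ℝ).inter_open_nonempty _ (isOpen_ball.inter isOpen_interior) hint
  exact (hC (hfill ⟨hzB, hzF⟩)).2 (interior_subset hzK)

theorem locallyConnectedSpace_iUnion_of_convex {ι : Type*} {D : ι → Set E} (hD : LocallyFinite D)
    (hclosed : ∀ i, IsClosed (D i)) (hconvex : ∀ i, Convex ℝ (D i)) :
    LocallyConnectedSpace (⋃ i, D i) := by
  refine locallyConnectedSpace_iff_connected_subsets.2 fun x V hV => ?_
  obtain ⟨u, hu, huV⟩ := mem_nhds_subtype _ _ _ |>.1 hV
  obtain ⟨r, hr, hball⟩ :=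
    Metric.mem_nhds_iff.1 (Filter.inter_mem hu (hD.eventually_subset hclosed x))
  have hstar : (↑) '' ((↑) ⁻¹' ball (x : E) r : Set ↥(⋃ i, D i)) =
      ⋃ i : {i // (x : E) ∈ D i}, D i ∩ ball (x : E) r := by
    ext z
    simp only [Subtype.image_preimage_coe, mem_inter_iff, mem_iUnion, Subtype.exists, exists_prop]
    exact ⟨fun ⟨⟨i, hi⟩, hz⟩ => ⟨i, (hball hz).2 hi, hi, hz⟩,
      fun ⟨i, _, hi, hz⟩ => ⟨⟨i, hi⟩, hz⟩⟩
  refine ⟨(↑) ⁻¹' ball (x : E) r,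
    continuous_subtype_val.continuousAt.preimage_mem_nhds (ball_mem_nhds _ hr), ?_,
    (preimage_mono (hball.trans inter_subset_left)).trans huV⟩
  rw [← Topology.IsInducing.subtypeVal.isPreconnected_image, hstar]
  exact isPreconnected_iUnion ⟨x, mem_iInter.2 fun i => ⟨i.2, mem_ball_self hr⟩⟩
    fun i => ((hconvex i).inter (convex_ball _ r)).isPreconnected

theorem isTame_iUnion_of_convex {ι : Type*} {D : ι → Set E} (hD : LocallyFinite D)
    (hclosed : ∀ i, IsClosed (D i)) (hconvex : ∀ i, Convex ℝ (D i))
    (hint : ∀ i, (interior (D i)).Nonempty) : IsTame (⋃ i, D i) where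
  isClosed := hD.isClosed_iUnion hclosed
  subset_closure_interior := iUnion_subset fun i => calc
    D i ⊆ closure (D i) := subset_closure
    _ = closure (interior (D i)) :=
      ((hconvex i).closure_interior_eq_closure_of_nonempty_interior (hint i)).symm
    _ ⊆ closure (interior (⋃ j, D j)) := closure_mono (interior_mono (subset_iUnion D i))
  locallyConnectedSpace := locallyConnectedSpace_iUnion_of_convex hD hclosed hconvex

theorem IsTame.eventually_infinite_closure_inter (hE : 1 < Module.rank ℝ E) (hK : IsTame K)
    (hL : IsTame L) (hx : x ∈ K ∆ L) : ∀ᶠ z in 𝓝[Kᶜ ∩ Lᶜ] x,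
      (closure (connectedComponentIn (Kᶜ ∩ Lᶜ) z) ∩
        closure (connectedComponentIn (K ∆ L) x)).Infinite := by
  wlog hxK : x ∈ K ∩ Lᶜ generalizing K L
  · rw [symmDiff_comm] at hx ⊢
    rw [inter_comm]
    exact this hL hK hx (hx.resolve_right hxK)
  obtain ⟨r, hr, hball⟩ := Metric.mem_nhds_iff.1 <| Filter.inter_mem
    (mem_nhdsWithin_iff_eventually.1 (hK.connectedComponentIn_mem_nhdsWithin hL.isClosed hxK))
    (hL.isClosed.isOpen_compl.mem_nhds hxK.2)
  filter_upwards [mem_nhdsWithin_of_mem_nhds (ball_mem_nhds x hr), self_mem_nhdsWithin]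
    with z hz hzW
  have hint : (ball x r ∩ interior K).Nonempty :=
    mem_closure_iff.1 (hK.subset_closure_interior hxK.1) _ isOpen_ball (mem_ball_self hr)
  have hinf : (closure (connectedComponentIn (ball x r \ K) z) ∩ (ball x r ∩ K)).Infinite :=
    fun hfin => not_countable_closure_connectedComponentIn_inter hE hK.isClosed ⟨hz, hzW.1⟩ hint
      hfin.countable
  refine hinf.mono (inter_subset_inter ?_ ?_)
  · exact closure_mono (connectedComponentIn_mono z fun w hw => ⟨hw.2, (hball hw.1).2⟩)
  · exact fun w hw => subset_closure
      (connectedComponentIn_mono x subset_union_left ((hball hw.1).1 hw.2))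

theorem IsTame.connectedComponentsMap_inclusion_bijective (hE : 1 < Module.rank ℝ E)
    (hK : IsTame K) (hL : IsTame L) (hfin : (frontier K ∩ frontier L).Finite)
    (hKL : ∀ x ∈ K ∩ Lᶜ, ∃! T, (∃ a ∈ Kᶜ ∩ Lᶜ, T = connectedComponentIn (Kᶜ ∩ Lᶜ) a) ∧
      (closure T ∩ closure (connectedComponentIn (K ∩ Lᶜ) x)).Infinite)
    (hLK : ∀ x ∈ Kᶜ ∩ L, ∃! T, (∃ a ∈ Kᶜ ∩ Lᶜ, T = connectedComponentIn (Kᶜ ∩ Lᶜ) a) ∧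
      (closure T ∩ closure (connectedComponentIn (Kᶜ ∩ L) x)).Infinite)
    (hsub : Kᶜ ∩ Lᶜ ⊆ Kᶜ ∪ Lᶜ) :
    Function.Bijective (continuous_inclusion hsub).connectedComponentsMap := by
  have hdiff : (Kᶜ ∪ Lᶜ) \ (Kᶜ ∩ Lᶜ) = K ∆ L :=
    (symmDiff_eq_sup_sdiff_inf Kᶜ Lᶜ).symm.trans (compl_symmDiff_compl K L)
  have hunique : ∀ x ∈ K ∆ L, ∃! T, (∃ a ∈ Kᶜ ∩ Lᶜ, T = connectedComponentIn (Kᶜ ∩ Lᶜ) a) ∧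
      (closure T ∩ closure (connectedComponentIn (K ∆ L) x)).Infinite := by
    rintro x (hx | hx)
    · rw [connectedComponentIn_symmDiff hK.isClosed hL.isClosed hx]
      exact hKL x hx
    · rw [symmDiff_comm, connectedComponentIn_symmDiff hL.isClosed hK.isClosed hx,
        inter_comm L Kᶜ]
      exact hLK x hx.symm
  constructor
  · obtain ⟨φ, hφW, hφ⟩ := exists_eventually_eq_extend_connectedComponentIn
      (adj := fun T C => (closure T ∩ closure C).Infinite)
      (hK.isClosed.isOpen_compl.inter hL.isClosed.isOpen_compl) hsub
      (hdiff ▸ fun _ => hK.connectedComponentIn_symmDiff_mem_nhdsWithin hL) (hdiff ▸ hunique)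
      (hdiff ▸ fun _ => hK.eventually_infinite_closure_inter hE hL)
    exact connectedComponentsMap_inclusion_injective hsub hφW hφ
  · refine connectedComponentsMap_inclusion_surjective hsub fun x hx => ?_
    obtain ⟨_, ⟨⟨a, ha, rfl⟩, hinf⟩, -⟩ := hunique x (hdiff ▸ hx)
    refine ⟨a, ha, connectedComponentIn_eq_of_closure_inter_nonempty hsub
      (hdiff ▸ sdiff_subset) ?_⟩
    obtain ⟨z, hz, hzf⟩ := (hinf.sdiff hfin).nonempty
    refine ⟨z, hz, ?_⟩
    rw [← compl_inter]
    exact fun hzKL => hzf <| closure_compl_inter_compl_inter_subset_frontier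
      ⟨closure_mono (connectedComponentIn_subset _ a) hz.1, hzKL⟩

end NormedSpace

theorem finite_sphere_inter_sphere {c c' : Plane} {r r' : ℝ} (hr : 0 < r) (hr' : 0 < r')
    (h : ∀ i, Disjoint (sphere (c i) r) (sphere (c' i) r')) :
    (sphere c r ∩ sphere c' r').Finite := by
  have hfin : (univ.pi fun i => sphere (c i) r ∪ sphere (c' i) r').Finite := by
    refine Finite.pi fun i => ?_
    rw [Real.sphere_eq_pair _ hr.le, Real.sphere_eq_pair _ hr'.le]
    exact toFinite _
  refine hfin.subset fun y ⟨hy, hy'⟩ => ?_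
  obtain ⟨i, hi⟩ := ((dist_pi_eq_iff hr).1 hy).1
  obtain ⟨j, hj⟩ := ((dist_pi_eq_iff hr').1 hy').1
  have hij : i ≠ j := by
    rintro rfl
    exact disjoint_left.1 (h i) hi hj
  intro k _
  obtain rfl | rfl : k = i ∨ k = j := by omega
  · exact Or.inl hi
  · exact Or.inr hj

theorem disjoint_sphere_of_forall_ne_intCast {a b r s : ℝ} {n : ℤ} (hr : 0 ≤ r) (hs : 0 ≤ s)
    (hab : a - b = n) (hadd : ∀ m : ℤ, r + s ≠ m) (hsub : ∀ m : ℤ, s - r ≠ m) :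
    Disjoint (sphere a r) (sphere b s) := by
  rw [Real.sphere_eq_pair _ hr, Real.sphere_eq_pair _ hs, disjoint_left]
  rintro _ (rfl | rfl) (h | h)
  · exact hsub (-n) (by push_cast; linarith)
  · exact hadd n (by linarith [mem_singleton_iff.1 h])
  · exact hadd (-n) (by push_cast; linarith [mem_singleton_iff.1 h])
  · exact hsub n (by linarith [mem_singleton_iff.1 h])

/-- The centre of `pixel p`, through which the pixel is described as a sup-norm ball. -/
def pixelCenter (p : ℕ × ℕ) : Plane := ![p.1 - 1 / 2, p.2 - 1 / 2]

theorem pixel_eq_closedBall (p : ℕ × ℕ) : pixel p = closedBall (pixelCenter p) (1 / 2) := by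
  ext x
  rw [mem_closedBall, dist_pi_le_iff one_half_pos.le, Fin.forall_fin_two]
  simp only [pixel, pixelCenter, mem_ofPred_eq, mem_Icc, Real.dist_eq, abs_le,
    Matrix.cons_val_zero, Matrix.cons_val_one]
  refine and_congr ?_ ?_ <;> constructor <;> rintro ⟨hl, hu⟩ <;> constructor <;> linarith

theorem thick_closedBall {ε r : ℝ} (hε : 0 ≤ ε) (hr : 0 ≤ r) (c : Plane) :
    thick ε (closedBall c r) = closedBall c (ε + r) := by
  rw [← cthickening_closedBall hε hr,
    (isCompact_closedBall c r).cthickening_eq_biUnion_closedBall hε]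
  ext y
  simp [thick, dist_comm y, dist_eq_norm]

theorem thick_iUnion {ι : Sort*} (ε : ℝ) (X : ι → Set Plane) :
    thick ε (⋃ i, X i) = ⋃ i, thick ε (X i) := by
  ext y
  simp only [thick, mem_iUnion, mem_ofPred_eq]
  tauto

theorem thick_fg {ε : ℝ} (hε : 0 ≤ ε) (S : Set (ℕ × ℕ)) :
    thick ε (fg S) = ⋃ p : S, closedBall (pixelCenter p) (ε + 1 / 2) := by
  rw [fg, biUnion_eq_iUnion, thick_iUnion]
  simp_rw [pixel_eq_closedBall, thick_closedBall hε one_half_pos.le]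

theorem isTame_thick_fg {ε : ℝ} (hε : 0 ≤ ε) {S : Set (ℕ × ℕ)} (hS : S.Finite) :
    IsTame (thick ε (fg S)) := by
  have := hS.to_subtype
  rw [thick_fg hε]
  refine isTame_iUnion_of_convex (locallyFinite_of_finite _) (fun _ => isClosed_closedBall)
    (fun _ => convex_closedBall _ _) fun p => ?_
  exact ⟨pixelCenter p, ball_subset_interior_closedBall (mem_ball_self (by positivity))⟩

theorem frontier_thick_fg_subset {ε : ℝ} (hε : 0 ≤ ε) {S : Set (ℕ × ℕ)} (hS : S.Finite) :
    frontier (thick ε (fg S)) ⊆ ⋃ p : S, sphere (pixelCenter p) (ε + 1 / 2) := by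
  have := hS.to_subtype
  rw [thick_fg hε]
  refine (frontier_iUnion_subset_of_locallyFinite (locallyFinite_of_finite _)).trans ?_
  exact iUnion_mono fun p => (frontier_closedBall' _ _).subset

theorem finite_frontier_thick_fg_inter {P G : Set (ℕ × ℕ)} (hP : P.Finite) (hG : G.Finite)
    {δ ε : ℝ} (hδ : 0 ≤ δ) (hε : 0 ≤ ε) (hadd : ∀ m : ℤ, δ + ε ≠ m) (hsub : ∀ m : ℤ, ε - δ ≠ m) :
    (frontier (thick δ (fg P)) ∩ frontier (thick ε (fg G))).Finite := by
  have := hP.to_subtype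
  have := hG.to_subtype
  have hspheres : ∀ p q : ℕ × ℕ,
      (sphere (pixelCenter p) (δ + 1 / 2) ∩ sphere (pixelCenter q) (ε + 1 / 2)).Finite := by
    intro p q
    refine finite_sphere_inter_sphere (by positivity) (by positivity) fun i => ?_
    have hint : pixelCenter p i - pixelCenter q i = ((![p.1 - q.1, p.2 - q.2] : Fin 2 → ℤ) i) := by
      fin_cases i <;> simp [pixelCenter]
    refine disjoint_sphere_of_forall_ne_intCast (by positivity) (by positivity) hint
      (fun m hm => hadd (m - 1) ?_) (fun m hm => hsub m ?_) <;> push_cast <;> linarith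
  refine (finite_iUnion fun p : P => finite_iUnion fun q : G => hspheres p q).subset ?_
  rintro y ⟨hyP, hyG⟩
  obtain ⟨p, hp⟩ := mem_iUnion.1 (frontier_thick_fg_subset hδ hP hyP)
  obtain ⟨q, hq⟩ := mem_iUnion.1 (frontier_thick_fg_subset hε hG hyG)
  exact mem_iUnion₂.2 ⟨p, q, hp, hq⟩

theorem zero_loss_components_bijection_background_general {P G : Set (ℕ × ℕ)} (hP : P.Finite)
    (hG : G.Finite) {ε : ℝ} (hε0 : 0 ≤ ε) (hε : ∀ m : ℤ, 3 * ε ≠ m)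
    (hFP : ∀ C, IsCompOf C (FPset P G ε) → ∃! T, IsCompOf T (TNset P G ε) ∧ SharesEdge T C)
    (hFN : ∀ C, IsCompOf C (FNset P G ε) → ∃! T, IsCompOf T (TNset P G ε) ∧ SharesEdge T C) :
    Function.Bijective
      (continuous_inclusion (TNset_subset_union P G ε)).connectedComponentsMap := by
  have hrank : 1 < Module.rank ℝ Plane := by simp
  have h2ε : 0 ≤ 2 * ε := by positivity
  have hfin : (frontier (thick ε (fg P)) ∩ frontier (thick (2 * ε) (fg G))).Finite :=
    finite_frontier_thick_fg_inter hP hG hε0 h2ε (fun m hm => hε m (by linarith))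
      (fun m hm => hε (3 * m) (by push_cast; linarith))
  exact (isTame_thick_fg hε0 hP).connectedComponentsMap_inclusion_bijective hrank
    (isTame_thick_fg h2ε hG) hfin (fun x hx => hFP _ ⟨x, hx, rfl⟩)
    (fun x hx => hFN _ ⟨x, hx, rfl⟩) (TNset_subset_union P G ε)

theorem OnGrid.finite {S : Set (ℕ × ℕ)} {h w : ℕ} (hS : OnGrid S h w) : S.Finite :=
  ((finite_Icc 1 h).prod (finite_Icc 1 w)).subset hS

theorem ne_intCast_of_pos_of_lt_one {x : ℝ} (h0 : 0 < x) (h1 : x < 1) (m : ℤ) : x ≠ m := by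
  rintro rfl
  norm_cast at h0 h1
  omega

/-- Under the zero-loss hypothesis, the inclusion
`TN ↪ B_ε(P) ∪ B_{2ε}(G)` (sending the component of `x` in `TN` to the component of `x` in
the union of the backgrounds) induces a bijection on connected components. -/
theorem zero_loss_components_bijection_background
    (h w : ℕ) (P G : Set (ℕ × ℕ)) (hP : OnGrid P h w) (hG : OnGrid G h w)
    (ε : ℝ) (hε0 : 0 < ε) (hε : ε < 1 / 4) (hzero : ZeroLoss P G ε) :
    Function.Bijective
      (continuous_inclusion (TNset_subset_union P G ε)).connectedComponentsMap :=
  zero_loss_components_bijection_background_general hP.finite hG.finite hε0.le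
    (ne_intCast_of_pos_of_lt_one (by linarith) (by linarith))
    (fun C hC => (hzero.1 C hC).2) (fun C hC => (hzero.2 C hC).2)

end
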